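/- Let k be a field and P a prime ideal in k[x_1,...,x_n]. Define I_P to be the collection of subsets S of the variable set E = {x_1,...,x_n} such that P ∩ k[S] = ⟨0⟩. Then (E, I_P) is a matroid; that is, I_P contains the empty set, is downward closed, and satisfies the augmentation axiom. -/

import Mathlib

open MvPolynomial

/-- `S` is independent modulo `P`, i.e. `P ∩ k[S] = ⟨0⟩`. -/
def IndepModP {k : Type*} [Field k] {n : ℕ} (P : Ideal (MvPolynomial (Fin n) k))
    (S : Set (Fin n)) : Prop :=
  ∀ f ∈ P, f ∈ MvPolynomial.supported k S → f = 0

/-!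
`P ∩ k[S] = 0` says that the residue classes of the variables in `S` are algebraically independent
in the domain `k[x_1, …, x_n] ⧸ P`. Algebraically independent subsets of a domain form a matroid,
and `I_P` is its pullback along `x_i ↦ x_i mod P`. For a coefficient ring `R` in place of `k`, the
condition `P ∩ R = 0` is encoded as faithfulness of the `R`-action on the quotient.
-/

section FamilyMatroid

variable {R A σ : Type*} [CommRing R] [CommRing A] [Algebra R A]

theorem algebraicIndepOn_iff_image_and_injOn [Nontrivial R] {x : σ → A} {S : Set σ} :
    AlgebraicIndepOn R x S ↔ AlgebraicIndepOn R id (x '' S) ∧ Set.InjOn x S where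
  mp hS :=
    have hinj : Set.InjOn x S := Set.injOn_iff_injective.2 hS.injective
    ⟨(algebraicIndependent_image hinj).1 hS, hinj⟩
  mpr := fun ⟨himage, hinj⟩ ↦ (algebraicIndependent_image hinj).2 himage

theorem comap_algebraicIndependent_matroid_indep_iff [Nontrivial R] [FaithfulSMul R A]
    [NoZeroDivisors A] {x : σ → A} {S : Set σ} :
    ((AlgebraicIndependent.matroid R A).comap x).Indep S ↔ AlgebraicIndepOn R x S := by
  rw [algebraicIndepOn_iff_image_and_injOn, Matroid.comap_indep_iff,
    AlgebraicIndependent.matroid_indep_iff]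

end FamilyMatroid

section CoordinateMatroid

variable {R σ : Type*} [CommRing R] (P : Ideal (MvPolynomial σ R))

/-- Independence of a set of variables modulo `P`, i.e. `P ∩ R[S] = 0`, for an arbitrary
coefficient ring `R` and an arbitrary type `σ` of variables. For a field and `σ = Fin n` it unfolds
to the same proposition as `IndepModP`. -/
def IndepMod (S : Set σ) : Prop :=
  ∀ f ∈ P, f ∈ supported R S → f = 0

theorem indepMod_ker_aeval_iff {A : Type*} [CommRing A] [Algebra R A] {x : σ → A} {S : Set σ} :
    IndepMod (RingHom.ker (aeval (R := R) x)) S ↔ AlgebraicIndepOn R x S :=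
  (forall_congr' fun _ ↦ forall_comm).trans algebraicIndependent_comp_subtype.symm

theorem ker_aeval_quotient_mk_X :
    RingHom.ker (aeval (R := R) fun i ↦ Ideal.Quotient.mkₐ R P (X i)) = P := by
  have aeval_eq_mk : aeval (fun i ↦ Ideal.Quotient.mkₐ R P (X i)) = Ideal.Quotient.mkₐ R P :=
    (aeval_unique _).symm
  rw [aeval_eq_mk]
  exact Ideal.Quotient.mkₐ_ker R P

variable {P} in
theorem indepMod_iff_algebraicIndepOn {S : Set σ} :
    IndepMod P S ↔ AlgebraicIndepOn R (fun i ↦ Ideal.Quotient.mkₐ R P (X i)) S := by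
  rw [← indepMod_ker_aeval_iff, ker_aeval_quotient_mk_X]

variable [P.IsPrime] [FaithfulSMul R (MvPolynomial σ R ⧸ P)]

/-- The matroid on the variables whose independent sets are those whose residue classes modulo `P`
are distinct and algebraically independent over `R`. -/
noncomputable def coordinateMatroid : Matroid σ :=
  (AlgebraicIndependent.matroid R (MvPolynomial σ R ⧸ P)).comap
    fun i ↦ Ideal.Quotient.mkₐ R P (X i)

variable {P} in
theorem coordinateMatroid_indep_iff {S : Set σ} :
    (coordinateMatroid P).Indep S ↔ IndepMod P S := by
  have : Nontrivial R := (algebraMap R (MvPolynomial σ R ⧸ P)).domain_nontrivial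
  rw [coordinateMatroid, comap_algebraicIndependent_matroid_indep_iff,
    indepMod_iff_algebraicIndepOn]

theorem coordinate_matroid_axioms_general :
    IndepMod P ∅ ∧
    (∀ I₁ I₂ : Set σ, I₂ ⊆ I₁ → IndepMod P I₁ → IndepMod P I₂) ∧
    (∀ I₁ I₂ : Set σ, IndepMod P I₁ → IndepMod P I₂ → I₁.encard < I₂.encard →
      ∃ x ∈ I₂ \ I₁, IndepMod P (insert x I₁)) := by
  simp only [← coordinateMatroid_indep_iff]
  exact ⟨(coordinateMatroid P).empty_indep, fun _ _ hsub h₁ ↦ h₁.subset hsub,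
    fun _ _ h₁ h₂ hlt ↦ h₁.augment h₂ hlt⟩

end CoordinateMatroid

/-- For a prime ideal `P ⊆ k[x_1,…,x_n]`, the collection
`I_P = {S : P ∩ k[S] = ⟨0⟩}` satisfies the independence axioms of a matroid on the
set of variables: it contains the empty set, is downward closed, and satisfies
augmentation. -/
theorem coordinate_matroid_axioms {k : Type*} [Field k] {n : ℕ}
    (P : Ideal (MvPolynomial (Fin n) k)) (hP : P.IsPrime) :
    IndepModP P (∅ : Set (Fin n)) ∧
    (∀ I₁ I₂ : Set (Fin n), I₂ ⊆ I₁ → IndepModP P I₁ → IndepModP P I₂) ∧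
    (∀ I₁ I₂ : Set (Fin n), IndepModP P I₁ → IndepModP P I₂ → I₁.ncard < I₂.ncard →
      ∃ x ∈ I₂ \ I₁, IndepModP P (insert x I₁)) := by
  obtain ⟨hempty, hsubset, haugment⟩ := coordinate_matroid_axioms_general P
  exact ⟨hempty, hsubset, fun I₁ I₂ h₁ h₂ hlt ↦ haugment I₁ I₂ h₁ h₂ <| by
    rwa [← I₁.toFinite.cast_ncard_eq, ← I₂.toFinite.cast_ncard_eq, Nat.cast_lt]⟩
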